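/- Pruning correspondence for simple Hurwitz numbers: for all (g,n) ≠ (0,1) with g ≥ 0, n ≥ 1, and all positive integers μ = (μ_1,…,μ_n), one has Ĥ_{g,n}(μ_1,…,μ_n) = Σ_{ν_1=1}^{μ_1} ⋯ Σ_{ν_n=1}^{μ_n} K̂_{g,n}(ν_1,…,ν_n) · Π_{i=1}^{n} μ_i^{μ_i−ν_i}/(μ_i−ν_i)!. -/

import Mathlib

/-- `σ` is a tuple of `m` transpositions in the symmetric group on `d` letters whose
ordered product is `T` and which generates a subgroup acting transitively.  These are
the objects counted by the simple Hurwitz numbers. -/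
def IsSimpleFactorisation {d m : ℕ} (T : Equiv.Perm (Fin d))
    (σ : Fin m → Equiv.Perm (Fin d)) : Prop :=
  (∀ i, (σ i).IsSwap) ∧
  (List.ofFn σ).prod = T ∧
  (∀ x y : Fin d, ∃ g ∈ Subgroup.closure (Set.range σ), g x = y)

/-- A pruned factorisation additionally moves every point by at least two of the
transpositions. -/
def IsPrunedFactorisation {d m : ℕ} (T : Equiv.Perm (Fin d))
    (σ : Fin m → Equiv.Perm (Fin d)) : Prop :=
  IsSimpleFactorisation T σ ∧
  (∀ x : Fin d, 2 ≤ Nat.card {i : Fin m // σ i x ≠ x})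

/-- `H g μ` is the normalised simple Hurwitz number `Ĥ_{g,n}(μ)`: the number of
factorisations of a permutation `T` of cycle type `μ` into `m = 2g - 2 + n + |μ|`
transpositions generating a transitive subgroup, divided by `m!`; this count is the
same for every `T` of cycle type `μ`. -/
def IsNormalisedSimpleHurwitz (H : ℕ → Multiset ℕ → ℚ) : Prop :=
  ∀ (g : ℕ) (μ : Multiset ℕ), (∀ x ∈ μ, 1 ≤ x) →
    ∀ T : Equiv.Perm (Fin μ.sum), T.cycleType = μ.filter (fun x => 2 ≤ x) →
      H g μ =
        (Nat.card {σ : Fin (2 * g + Multiset.card μ + μ.sum - 2) → Equiv.Perm (Fin μ.sum) //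
            IsSimpleFactorisation T σ} : ℚ) /
          Nat.factorial (2 * g + Multiset.card μ + μ.sum - 2)

/-- `K g μ` is the normalised pruned simple Hurwitz number `K̂_{g,n}(μ)`. -/
def IsNormalisedPrunedHurwitz (K : ℕ → Multiset ℕ → ℚ) : Prop :=
  ∀ (g : ℕ) (μ : Multiset ℕ), (∀ x ∈ μ, 1 ≤ x) →
    ∀ T : Equiv.Perm (Fin μ.sum), T.cycleType = μ.filter (fun x => 2 ≤ x) →
      K g μ =
        (Nat.card {σ : Fin (2 * g + Multiset.card μ + μ.sum - 2) → Equiv.Perm (Fin μ.sum) //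
            IsPrunedFactorisation T σ} : ℚ) /
          Nat.factorial (2 * g + Multiset.card μ + μ.sum - 2)

/-!
A pruned factorisation is one without leaves, a leaf being a point moved by exactly one letter. A
leaf `x` can be removed together with the letter moving it. The result factors the permutation
obtained from `T` by deleting `x` from its cycle, and the removal can be undone once the position
of the letter is known. Conjugation by `T` permutes the factorisations of `T`, so the leaves are
equidistributed along each cycle. Counting factorisations with a marked leaf in these two ways and
iterating, the number of factorisations of a permutation of cycle type `ν` with marked leaves, whose
deletion leaves cycles of lengths `l`, is `m! * Ĥ(l) * ∏ cᵢ` with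
`cᵢ = νᵢ lᵢ^(νᵢ - lᵢ - 1) / (νᵢ - lᵢ)!`. Inclusion–exclusion over the marked leaves then gives
`K̂(ν) = ∑ Ĥ(l) ∏ (-1)^(νᵢ - lᵢ) cᵢ`, and this triangular system is inverted one variable at a time
by the binomial theorem.
-/

namespace Pruning

open Equiv Finset
open scoped Nat

section Leaves

variable {α : Type*}

lemma rel_of_mem_closure {L : Set (Perm α)} (r : Setoid α) (h : ∀ s ∈ L, ∀ a, r (s a) a)
    {g : Perm α} (hg : g ∈ Subgroup.closure L) (a : α) : r (g a) a := by
  induction hg using Subgroup.closure_induction generalizing a with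
  | mem s hs => exact h s hs a
  | one => exact r.refl a
  | mul g₁ g₂ _ _ ih₁ ih₂ => exact r.trans (ih₁ (g₂ a)) (ih₂ a)
  | inv g _ ih => simpa using r.symm (ih (g⁻¹ a))

lemma prod_apply_eq_self {w : List (Perm α)} {x : α} (h : ∀ s ∈ w, s x = x) : w.prod x = x :=
  (MulAction.stabilizer (Perm α) x).list_prod_mem h

lemma apply_mem_iff {C : Finset α} {u : Perm α} (hu : ∀ a ∉ C, u a = a) {a : α} :
    u a ∈ C ↔ a ∈ C := by
  refine not_iff_not.1 ⟨fun h => ?_, fun h => (hu a h).symm ▸ h⟩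
  rwa [← u.injective (hu _ h)]

lemma prod_take_inv_mem_iff {C : Finset α} {w : List (Perm α)} (hw : ∀ s ∈ w, ∀ a ∉ C, s a = a)
    (p : ℕ) {a : α} : (w.take p).prod⁻¹ a ∈ C ↔ a ∈ C := by
  have hu : ∀ b ∉ C, (w.take p).prod b = b := fun b hb =>
    prod_apply_eq_self fun s hs => hw s (List.mem_of_mem_take hs) b hb
  simpa using (apply_mem_iff hu (a := (w.take p).prod⁻¹ a)).symm

lemma prod_take_inv_ne {x z : α} {w : List (Perm α)} (hw : ∀ s ∈ w, s x = x) (hz : z ≠ x) (p : ℕ) :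
    (w.take p).prod⁻¹ z ≠ x := by
  have hx : (w.take p).prod x = x := prod_apply_eq_self fun s hs => hw s (List.mem_of_mem_take hs)
  rwa [Ne, Perm.inv_eq_iff_eq, hx]

/-- The elements of `L` generate a group acting transitively on `C`. -/
def IsTransitiveOn (L : Set (Perm α)) (C : Finset α) : Prop :=
  ∀ a ∈ C, ∀ b ∈ C, ∃ g ∈ Subgroup.closure L, g a = b

lemma isTransitiveOn_of_forall_exists {L : Set (Perm α)} {C : Finset α} {y : α}
    (h : ∀ a ∈ C, ∃ g ∈ Subgroup.closure L, g a = y) : IsTransitiveOn L C := by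
  intro a ha b hb
  obtain ⟨g, hg, rfl⟩ := h a ha
  obtain ⟨k, hk, hkb⟩ := h b hb
  exact ⟨k⁻¹ * g, mul_mem (inv_mem hk) hg, by simp [← hkb]⟩

variable [DecidableEq α]

lemma isTransitiveOn_insert_swap_iff {L : Set (Perm α)} {C : Finset α} {x y : α}
    (hxy : y ≠ x) (hy : y ∈ C) (hL : ∀ s ∈ L, s x = x) :
    IsTransitiveOn (insert (swap x y) L) C ↔ IsTransitiveOn L (C.erase x) := by
  have hy' : y ∈ C.erase x := mem_erase.2 ⟨hxy, hy⟩
  constructor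
  · intro h
    -- Collapsing `x` to `y` turns the orbits of the larger group into those of the smaller one.
    let ρ : α → α := fun a => if a = x then y else a
    let orbit := MulAction.orbitRel (Subgroup.closure L) α
    have hρ : ∀ s ∈ insert (swap x y) L, ∀ a, orbit.comap ρ (s a) a := by
      rintro s (rfl | hs) a
      · have : ρ (swap x y a) = ρ a := by grind
        exact ⟨1, this.symm⟩
      · obtain hsa | hsa : s (ρ a) = ρ (s a) ∨ ρ a = ρ (s a) := by
          grind [s.injective.eq_iff (a := a) (b := x)]
        · exact ⟨⟨s, Subgroup.subset_closure hs⟩, hsa⟩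
        · exact ⟨1, hsa⟩
    refine isTransitiveOn_of_forall_exists (y := y) fun a ha => ?_
    obtain ⟨g, hg, rfl⟩ := h y hy a (mem_of_mem_erase ha)
    obtain ⟨⟨k, hk⟩, hka⟩ := rel_of_mem_closure (orbit.comap ρ) hρ hg y
    refine ⟨k⁻¹, inv_mem hk, ?_⟩
    have hky : k y = g y := by simpa [ρ, hxy, ne_of_mem_erase ha] using hka
    simp [← hky]
  · intro h
    refine isTransitiveOn_of_forall_exists (y := y) fun a ha => ?_
    rcases eq_or_ne a x with rfl | hax
    · exact ⟨_, Subgroup.subset_closure (Set.mem_insert _ _), swap_apply_left a y⟩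
    · obtain ⟨g, hg, hga⟩ := h a (mem_erase.2 ⟨hax, ha⟩) y hy'
      exact ⟨g, Subgroup.closure_mono (Set.subset_insert _ _) hg, hga⟩

/-- The number of letters of `w` moving `x`: the degree of `x` in the graph on `α` whose edges are
the transpositions of `w`. A *leaf* of `w` is a point of valency `1`, and pruned factorisations are
those without leaves. -/
def valency (w : List (Perm α)) (x : α) : ℕ :=
  w.countP fun s => s x ≠ x

lemma valency_append (w₁ w₂ : List (Perm α)) (x : α) :
    valency (w₁ ++ w₂) x = valency w₁ x + valency w₂ x :=
  List.countP_append

lemma valency_cons (s : Perm α) (w : List (Perm α)) (x : α) :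
    valency (s :: w) x = valency w x + if s x ≠ x then 1 else 0 := by
  simp [valency, List.countP_cons]

lemma valency_eq_zero {w : List (Perm α)} {x : α} : valency w x = 0 ↔ ∀ s ∈ w, s x = x := by
  simp [valency, List.countP_eq_zero]

lemma valency_take_add_valency_drop (w : List (Perm α)) (p : ℕ) (x : α) :
    valency (w.take p) x + valency (w.drop p) x = valency w x := by
  rw [← valency_append, List.take_append_drop]

lemma prod_take_apply_eq_or_of_valency_eq_one {w : List (Perm α)} {x : α} (hx : valency w x = 1)
    (p : ℕ) : (w.take p).prod x = x ∨ (w.take p).prod x = w.prod x := by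
  have hsum := valency_take_add_valency_drop w p x
  obtain h | h : valency (w.take p) x = 0 ∨ valency (w.drop p) x = 0 := by omega
  · exact .inl (prod_apply_eq_self (valency_eq_zero.1 h))
  · right
    rw [← w.prod_take_mul_prod_drop p, Perm.mul_apply, prod_apply_eq_self (valency_eq_zero.1 h)]

/-- Insertion of one letter at position `p` in a word `w` fixing `x`, so that `x` becomes a leaf.
The new transposition is chosen so that the product of the word is multiplied by `swap x z` on the
left, whatever `p` is. -/
def insertLeaf (x z : α) (p : ℕ) (w : List (Perm α)) : List (Perm α) :=
  w.take p ++ swap x ((w.take p).prod⁻¹ z) :: w.drop p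

lemma length_insertLeaf (x z : α) (p : ℕ) (w : List (Perm α)) :
    (insertLeaf x z p w).length = w.length + 1 := by
  simp only [insertLeaf, List.length_append, List.length_cons, List.length_take, List.length_drop]
  omega

lemma mem_insertLeaf {x z : α} {p : ℕ} {w : List (Perm α)} {s : Perm α} :
    s ∈ insertLeaf x z p w ↔ s = swap x ((w.take p).prod⁻¹ z) ∨ s ∈ w := by
  have hw : s ∈ w ↔ s ∈ w.take p ∨ s ∈ w.drop p := by
    rw [← List.mem_append, List.take_append_drop]
  rw [insertLeaf, List.mem_append, List.mem_cons, hw]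
  tauto

lemma prod_insertLeaf {x : α} {w : List (Perm α)} (hw : ∀ s ∈ w, s x = x) (z : α) (p : ℕ) :
    (insertLeaf x z p w).prod = swap x z * w.prod := by
  have hx : (w.take p).prod x = x := prod_apply_eq_self fun s hs => hw s (List.mem_of_mem_take hs)
  rw [insertLeaf, List.prod_append, List.prod_cons, ← mul_assoc, mul_swap_eq_swap_mul, hx,
    mul_assoc, w.prod_take_mul_prod_drop p]
  simp

lemma valency_insertLeaf {x z a : α} (hax : a ≠ x) (p : ℕ) (w : List (Perm α)) :
    valency (insertLeaf x z p w) a =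
      valency w a + if (w.take p).prod⁻¹ z = a then 1 else 0 := by
  have hswap (y : α) : swap x y a ≠ a ↔ y = a := by grind
  rw [insertLeaf, valency_append, valency_cons, ← valency_take_add_valency_drop w p a, add_assoc]
  simp only [hswap]

lemma valency_insertLeaf_self {x z : α} {w : List (Perm α)} (hw : ∀ s ∈ w, s x = x) (hz : z ≠ x)
    (p : ℕ) : valency (insertLeaf x z p w) x = 1 := by
  have hne := prod_take_inv_ne hw hz p
  rw [insertLeaf, valency_append, valency_cons, ← add_assoc, valency_take_add_valency_drop,
    valency_eq_zero.2 hw, swap_apply_left, if_pos hne]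

lemma insertLeaf_inj {x z : α} {p p' : ℕ} {w w' : List (Perm α)} (hw : ∀ s ∈ w, s x = x)
    (hw' : ∀ s ∈ w', s x = x) (hz : z ≠ x) (hp : p ≤ w.length) (hp' : p' ≤ w'.length)
    (h : insertLeaf x z p w = insertLeaf x z p' w') : w = w' ∧ p = p' := by
  have hnot : ∀ v ⊆ w, swap x ((w'.take p').prod⁻¹ z) ∉ v := fun v hv hmem =>
    prod_take_inv_ne hw' hz p' (by simpa using hw _ (hv hmem))
  obtain ⟨htake, -, hdrop⟩ := (List.append_cons_inj_of_notMem (hnot _ (w.take_subset p))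
    (hnot _ (w.drop_subset p))).1 h
  constructor
  · rw [← w.take_append_drop p, htake, hdrop, List.take_append_drop]
  · simpa [hp, hp'] using congrArg List.length htake

lemma exists_append_cons_of_valency_eq_one {w : List (Perm α)} {x : α} (hx : valency w x = 1) :
    ∃ w₁ s w₂, w = w₁ ++ s :: w₂ ∧ s x ≠ x ∧ ∀ t ∈ w₁ ++ w₂, t x = x := by
  obtain ⟨s, hs, hsx⟩ := List.countP_pos_iff.1 (hx.symm ▸ one_pos : 0 < valency w x)
  obtain ⟨w₁, w₂, rfl⟩ := List.append_of_mem hs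
  have hsx : s x ≠ x := by simpa using hsx
  refine ⟨w₁, s, w₂, rfl, hsx, valency_eq_zero.1 ?_⟩
  rw [valency_append, valency_cons, if_pos hsx] at hx
  rw [valency_append]
  omega

lemma eq_swap_of_isSwap {s : Perm α} (hs : s.IsSwap) {x : α} (hx : s x ≠ x) : s = swap x (s x) := by
  obtain ⟨a, b, -, rfl⟩ := hs
  grind [swap_comm]

lemma prod_apply_ne_of_valency_eq_one {w : List (Perm α)} {x : α} (hx : valency w x = 1) :
    w.prod x ≠ x := by
  obtain ⟨w₁, s, w₂, rfl, hsx, hfix⟩ := exists_append_cons_of_valency_eq_one hx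
  have h₁ : w₁.prod x = x := prod_apply_eq_self fun t ht => hfix t (List.mem_append_left _ ht)
  have h₂ : w₂.prod x = x := prod_apply_eq_self fun t ht => hfix t (List.mem_append_right _ ht)
  rw [List.prod_append, List.prod_cons, Perm.mul_apply, Perm.mul_apply, h₂]
  exact fun h => hsx (w₁.prod.injective (h.trans h₁.symm))

lemma exists_insertLeaf_eq {w : List (Perm α)} (hw : ∀ s ∈ w, s.IsSwap) {x : α}
    (hx : valency w x = 1) :
    ∃ v p, p ≤ v.length ∧ (∀ s ∈ v, s x = x) ∧ insertLeaf x (w.prod x) p v = w := by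
  obtain ⟨w₁, s, w₂, rfl, hsx, hfix⟩ := exists_append_cons_of_valency_eq_one hx
  have h₂ : w₂.prod x = x := prod_apply_eq_self fun t ht => hfix t (List.mem_append_right _ ht)
  refine ⟨w₁ ++ w₂, w₁.length, by simp, hfix, ?_⟩
  have hs : s = swap x (s x) := eq_swap_of_isSwap (hw s (by simp)) hsx
  simp [insertLeaf, h₂, ← hs]

end Leaves

section Factorisations

variable {α : Type*} {C : Finset α} {T : Perm α} {w : List (Perm α)}

/-- `w` is a transitive factorisation of `T` into transpositions of the finite set `C`; permutations
of `C` are encoded as permutations of the ambient type fixing the complement of `C`, so that points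
can be erased from `C` without changing types. -/
structure IsFactorisation [DecidableEq α] (C : Finset α) (T : Perm α) (w : List (Perm α)) :
    Prop where
  isSwap : ∀ s ∈ w, s.IsSwap
  apply_eq_self : ∀ s ∈ w, ∀ a ∉ C, s a = a
  prod_eq : w.prod = T
  isTransitiveOn : IsTransitiveOn {s | s ∈ w} C

variable [DecidableEq α]

lemma IsFactorisation.apply_mem_iff (h : IsFactorisation C T w) {a : α} : T a ∈ C ↔ a ∈ C :=
  Pruning.apply_mem_iff fun b hb =>
    h.prod_eq ▸ prod_apply_eq_self fun s hs => h.apply_eq_self s hs b hb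

lemma isFactorisation_insertLeaf_iff {x z : α} (hz : z ∈ C.erase x)
    (hw : ∀ s ∈ w, ∀ a ∉ C.erase x, s a = a) (hx : x ∈ C) (p : ℕ) :
    IsFactorisation C T (insertLeaf x z p w) ↔ IsFactorisation (C.erase x) (swap x z * T) w := by
  have hwx : ∀ s ∈ w, s x = x := fun s hs => hw s hs x (notMem_erase x C)
  obtain ⟨hyx, hyC⟩ := mem_erase.1 ((prod_take_inv_mem_iff hw p).2 hz)
  have hletters : {s | s ∈ insertLeaf x z p w} =
      insert (swap x ((w.take p).prod⁻¹ z)) {s | s ∈ w} := by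
    ext s
    exact mem_insertLeaf
  have hprod : (insertLeaf x z p w).prod = T ↔ w.prod = swap x z * T := by
    rw [prod_insertLeaf hwx, ← inv_mul_eq_iff_eq_mul, swap_inv]
  have htrans : IsTransitiveOn {s | s ∈ insertLeaf x z p w} C ↔
      IsTransitiveOn {s | s ∈ w} (C.erase x) := by
    rw [hletters]
    exact isTransitiveOn_insert_swap_iff hyx hyC hwx
  constructor
  · rintro ⟨hswap, -, hT, htr⟩
    exact ⟨fun s hs => hswap s (mem_insertLeaf.2 (.inr hs)), hw, hprod.1 hT, htrans.1 htr⟩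
  · rintro ⟨hswap, -, hT, htr⟩
    refine ⟨fun s hs => ?_, fun s hs a ha => ?_, hprod.2 hT, htrans.2 htr⟩
    · rcases mem_insertLeaf.1 hs with rfl | hs
      · exact ⟨x, _, hyx.symm, rfl⟩
      · exact hswap s hs
    · rcases mem_insertLeaf.1 hs with rfl | hs
      · exact swap_apply_of_ne_of_ne (by grind) (by grind)
      · exact hw s hs a (by grind)

lemma IsFactorisation.exists_insertLeaf_eq {x : α} (h : IsFactorisation C T w) (hx : x ∈ C)
    (hval : valency w x = 1) :
    ∃ v p, p ≤ v.length ∧ IsFactorisation (C.erase x) (swap x (T x) * T) v ∧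
      insertLeaf x (T x) p v = w := by
  obtain ⟨v, p, hp, hfix, hv⟩ := Pruning.exists_insertLeaf_eq h.isSwap hval
  rw [h.prod_eq] at hv
  have hTx : T x ∈ C.erase x :=
    mem_erase.2 ⟨h.prod_eq ▸ prod_apply_ne_of_valency_eq_one hval, h.apply_mem_iff.2 hx⟩
  have hsupp : ∀ s ∈ v, ∀ a ∉ C.erase x, s a = a := by
    intro s hs a ha
    rcases eq_or_ne a x with rfl | hax
    · exact hfix s hs
    · exact h.apply_eq_self s (hv ▸ mem_insertLeaf.2 (.inr hs)) a (by grind)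
  exact ⟨v, p, hp, (isFactorisation_insertLeaf_iff hTx hsupp hx p).1 (hv.symm ▸ h), hv⟩

lemma IsFactorisation.valency_ne_zero (h : IsFactorisation C T w) (hw : w ≠ []) {a : α}
    (ha : a ∈ C) : valency w a ≠ 0 := by
  intro hval
  obtain ⟨s, hs⟩ := List.exists_mem_of_ne_nil w hw
  obtain ⟨b, c, hbc, rfl⟩ := h.isSwap s hs
  have hfix : Subgroup.closure {s | s ∈ w} ≤ MulAction.stabilizer (Perm α) a :=
    (Subgroup.closure_le _).2 (valency_eq_zero.1 hval)
  have hsingle : ∀ d ∈ C, a = d := by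
    intro d hd
    obtain ⟨g, hg, rfl⟩ := h.isTransitiveOn a ha d hd
    exact (hfix hg).symm
  have hmem : ∀ d, swap b c d ≠ d → a = d := fun d hd =>
    hsingle d (by_contra fun hdC => hd (h.apply_eq_self _ hs d hdC))
  exact hbc ((hmem b (by simpa using hbc.symm)).symm.trans (hmem c (by simpa using hbc)))

end Factorisations

section Labels

variable {α ι : Type*} {C : Finset α} {T : Perm α} {lab : α → ι}

/-- `T` is supported on `C`, and `lab` names its cycles there: two points of `C` lie on the same
cycle of `T` if and only if they have the same label. -/
structure LabelsCycles (C : Finset α) (T : Perm α) (lab : α → ι) : Prop where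
  apply_eq_self : ∀ a ∉ C, T a = a
  sameCycle_iff : ∀ a ∈ C, ∀ b ∈ C, T.SameCycle a b ↔ lab a = lab b

lemma LabelsCycles.apply_mem_iff (h : LabelsCycles C T lab) {a : α} : T a ∈ C ↔ a ∈ C :=
  Pruning.apply_mem_iff h.apply_eq_self

lemma LabelsCycles.lab_apply (h : LabelsCycles C T lab) {a : α} (ha : a ∈ C) :
    lab (T a) = lab a :=
  ((h.sameCycle_iff _ (h.apply_mem_iff.2 ha) _ ha).1 ⟨-1, by simp⟩)

lemma LabelsCycles.mem_of_apply_ne_self (h : LabelsCycles C T lab) {x : α} (hx : T x ≠ x) :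
    x ∈ C :=
  of_not_not fun hxC => hx (h.apply_eq_self x hxC)

lemma swap_apply_mul_apply [DecidableEq α] (T : Perm α) (x a : α) :
    (swap x (T x) * T) a = if a = x then x else if T a = x then T x else T a := by
  rw [Perm.mul_apply, swap_apply_def]
  simp only [T.injective.eq_iff]
  grind

lemma sameCycle_swap_mul_apply [DecidableEq α] (T : Perm α) (x a : α) :
    T.SameCycle a ((swap x (T x) * T) a) := by
  rw [swap_apply_mul_apply]
  split_ifs with ha hTa
  · rw [ha]
  · rw [← hTa, Perm.sameCycle_apply_right, Perm.sameCycle_apply_right]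
  · rw [Perm.sameCycle_apply_right]

lemma sameCycle_swap_mul_iff [DecidableEq α] [Finite α] {x a b : α} (hx : T x ≠ x) (ha : a ≠ x)
    (hb : b ≠ x) : (swap x (T x) * T).SameCycle a b ↔ T.SameCycle a b := by
  constructor
  · rintro ⟨k, rfl⟩
    have hstep : ∀ s ∈ ({swap x (T x) * T} : Set (Perm α)), ∀ c, T.SameCycle (s c) c := by
      rintro s rfl c
      exact (sameCycle_swap_mul_apply T x c).symm
    exact (rel_of_mem_closure (Perm.SameCycle.setoid T) hstep
      (Subgroup.mem_closure_singleton.2 ⟨k, rfl⟩) a).symm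
  · intro h
    -- The new cycle follows the old one, skipping `x`.
    have hskip (n : ℕ) : (swap x (T x) * T).SameCycle a
        (if (T ^ n) a = x then T x else (T ^ n) a) := by
      induction n with
      | zero => simp only [pow_zero, Perm.one_apply, if_neg ha, Perm.SameCycle.refl]
      | succ n ih =>
        rw [pow_succ', Perm.mul_apply]
        split_ifs at ih with hn
        · rwa [hn, if_neg hx]
        · rwa [← Perm.sameCycle_apply_right, swap_apply_mul_apply, if_neg hn] at ih
    obtain ⟨n, rfl⟩ := h.exists_nat_pow_eq
    simpa only [if_neg hb] using hskip n

lemma LabelsCycles.erase [DecidableEq α] [Finite α] (h : LabelsCycles C T lab) {x : α}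
    (hx : T x ≠ x) : LabelsCycles (C.erase x) (swap x (T x) * T) lab where
  apply_eq_self a ha := by
    rcases eq_or_ne a x with rfl | hax
    · simp
    · have haC : a ∉ C := fun haC => ha (mem_erase.2 ⟨hax, haC⟩)
      have hTa := h.apply_eq_self a haC
      rw [Perm.mul_apply, hTa]
      exact swap_apply_of_ne_of_ne hax fun haT => hx (T.injective (haT ▸ hTa))
  sameCycle_iff a ha b hb := by
    rw [sameCycle_swap_mul_iff hx (ne_of_mem_erase ha) (ne_of_mem_erase hb)]
    exact h.sameCycle_iff a (mem_of_mem_erase ha) b (mem_of_mem_erase hb)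

/-- The numbers of points of `C` with each label: when `lab` names the cycles of a permutation of
`C`, the tuple of its cycle lengths. -/
def profile [DecidableEq ι] (C : Finset α) (lab : α → ι) (i : ι) : ℕ :=
  #{a ∈ C | lab a = i}

variable [DecidableEq ι]

lemma profile_mono {S : Finset α} (hS : S ⊆ C) (lab : α → ι) : profile S lab ≤ profile C lab :=
  fun _ => card_le_card (filter_subset_filter _ hS)

lemma sum_profile [Fintype ι] (C : Finset α) (lab : α → ι) : ∑ i, profile C lab i = #C :=
  (card_eq_sum_card_fiberwise fun a _ => mem_univ (lab a)).symm

lemma LabelsCycles.apply_ne_self_iff (h : LabelsCycles C T lab) {x : α} (hx : x ∈ C) :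
    T x ≠ x ↔ 1 < profile C lab (lab x) := by
  have hTx : T x ∈ C := h.apply_mem_iff.2 hx
  constructor
  · intro hne
    exact one_lt_card.2 ⟨T x, mem_filter.2 ⟨hTx, h.lab_apply hx⟩, x, mem_filter.2 ⟨hx, rfl⟩, hne⟩
  · intro hcard hfix
    obtain ⟨y, hy, hyx⟩ := exists_mem_ne hcard x
    obtain ⟨hyC, hlab⟩ := mem_filter.1 hy
    exact hyx ((Perm.SameCycle.eq_of_left ((h.sameCycle_iff x hx y hyC).2 hlab.symm) hfix).symm)

lemma profile_pos_iff {i : ι} : 0 < profile C lab i ↔ ∃ a ∈ C, lab a = i := by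
  simp [profile, card_pos, Finset.Nonempty]

variable [DecidableEq α]

lemma profile_sdiff_add_profile {S : Finset α} (hS : S ⊆ C) (lab : α → ι) (i : ι) :
    profile (C \ S) lab i + profile S lab i = profile C lab i := by
  have hS' : {a ∈ S | lab a = i} ⊆ {a ∈ C | lab a = i} := filter_subset_filter _ hS
  rw [profile, profile, profile, ← card_sdiff_add_card_eq_card hS']
  congr 2
  grind

lemma profile_erase_add_single {x : α} (hx : x ∈ C) (lab : α → ι) :
    profile (C.erase x) lab + Pi.single (lab x) 1 = profile C lab := by
  ext i
  simp only [profile, Pi.add_apply, Pi.single_apply, filter_erase]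
  split_ifs with hi
  · exact card_erase_add_one (by simp [hx, hi])
  · rw [erase_eq_of_notMem (by grind), add_zero]

end Labels

section Conjugation

variable {α ι : Type*} {C : Finset α} {T : Perm α} {lab : α → ι} {w : List (Perm α)}

lemma prod_take_map_conj (u : Perm α) (w : List (Perm α)) (p : ℕ) :
    ((w.map (MulAut.conj u)).take p).prod = MulAut.conj u (w.take p).prod := by
  rw [← List.map_take, map_list_prod]

lemma map_toEmbedding_eq_self (hT : ∀ a ∉ C, T a = a) : C.map T.toEmbedding = C :=
  map_eq_of_subset fun _ ha => by
    obtain ⟨b, hb, rfl⟩ := mem_map.1 ha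
    exact (apply_mem_iff hT).2 hb

lemma LabelsCycles.profile_map [DecidableEq ι] (h : LabelsCycles C T lab) {S : Finset α}
    (hS : S ⊆ C) : profile (S.map T.toEmbedding) lab = profile S lab := by
  ext i
  rw [profile, filter_map, card_map, profile]
  congr 1
  exact filter_congr fun a ha => by simp [h.lab_apply (hS ha)]

variable [DecidableEq α]

lemma valency_map_conj (u : Perm α) (w : List (Perm α)) (a : α) :
    valency (w.map (MulAut.conj u)) (u a) = valency w a := by
  simp [valency, List.countP_map, Function.comp_def]

lemma IsFactorisation.map_conj (h : IsFactorisation C T w) (u : Perm α) :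
    IsFactorisation (C.map u.toEmbedding) (u * T * u⁻¹) (w.map (MulAut.conj u)) where
  isSwap s hs := by
    obtain ⟨t, ht, rfl⟩ := List.mem_map.1 hs
    obtain ⟨a, b, hab, rfl⟩ := h.isSwap t ht
    exact ⟨u a, u b, u.injective.ne hab, (swap_apply_apply u a b).symm⟩
  apply_eq_self s hs a ha := by
    obtain ⟨t, ht, rfl⟩ := List.mem_map.1 hs
    have hta : t (u⁻¹ a) = u⁻¹ a := h.apply_eq_self t ht _ fun hC => ha <| by
      simpa using mem_map_of_mem u.toEmbedding hC
    rw [MulAut.conj_apply, Perm.mul_apply, Perm.mul_apply, hta]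
    simp
  prod_eq := by rw [← map_list_prod, h.prod_eq, MulAut.conj_apply]
  isTransitiveOn := by
    have hletters : {s | s ∈ w.map (MulAut.conj u)} =
        (MulAut.conj u).toMonoidHom '' {s | s ∈ w} := by
      ext s
      simp
    rw [hletters]
    intro a ha b hb
    obtain ⟨a, haC, rfl⟩ := mem_map.1 ha
    obtain ⟨b, hbC, rfl⟩ := mem_map.1 hb
    obtain ⟨g, hg, rfl⟩ := h.isTransitiveOn a haC b hbC
    exact ⟨MulAut.conj u g, MonoidHom.map_closure (MulAut.conj u).toMonoidHom _ ▸
      Subgroup.mem_map_of_mem _ hg, by simp⟩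

end Conjugation

section MarkedFactorisations

variable {α ι : Type*} [DecidableEq α] [Finite α] [DecidableEq ι]
  {C : Finset α} {T : Perm α} {lab : α → ι} {m : ℕ} {l : ι → ℕ}

open scoped Classical in
/-- The finite set of all transitive factorisations of `T` into `m` transpositions of `C`. -/
noncomputable def factorisations (C : Finset α) (T : Perm α) (m : ℕ) : Finset (List (Perm α)) :=
  {w ∈ (List.finite_length_eq (Perm α) m).toFinset | IsFactorisation C T w}

lemma mem_factorisations {w : List (Perm α)} :
    w ∈ factorisations C T m ↔ w.length = m ∧ IsFactorisation C T w := by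
  simp [factorisations]

open scoped Classical in
/-- Factorisations of length `m` with a set of marked leaves. They are classified by the profile of
the set of *unmarked* points, because this does not change when a marked leaf is removed. -/
noncomputable def markedFactorisations (C : Finset α) (T : Perm α) (lab : α → ι) (m : ℕ)
    (l : ι → ℕ) : Finset (List (Perm α) × Finset α) :=
  {q ∈ factorisations C T m ×ˢ C.powerset |
    (∀ a ∈ q.2, valency q.1 a = 1) ∧ profile (C \ q.2) lab = l}

lemma mem_markedFactorisations {w : List (Perm α)} {S : Finset α} :
    (w, S) ∈ markedFactorisations C T lab m l ↔ (w.length = m ∧ IsFactorisation C T w) ∧ S ⊆ C ∧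
      (∀ a ∈ S, valency w a = 1) ∧ profile (C \ S) lab = l := by
  simp only [markedFactorisations, mem_filter, mem_product, mem_factorisations, mem_powerset,
    and_assoc]

/-- The simultaneous conjugate by `u` of a word and of a set of marked points. -/
def conj (u : Perm α) (q : List (Perm α) × Finset α) : List (Perm α) × Finset α :=
  (q.1.map (MulAut.conj u), q.2.map u.toEmbedding)

omit [DecidableEq α] [Finite α] in
lemma conj_injective (u : Perm α) : Function.Injective (conj u) := fun _ _ h =>
  Prod.ext (List.map_injective_iff.2 (MulAut.conj u).injective (congrArg Prod.fst h))
    (map_injective _ (congrArg Prod.snd h))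

lemma LabelsCycles.conj_mem_markedFactorisations (h : LabelsCycles C T lab)
    {q : List (Perm α) × Finset α} (hq : q ∈ markedFactorisations C T lab m l) :
    conj T q ∈ markedFactorisations C T lab m l := by
  obtain ⟨w, S⟩ := q
  obtain ⟨⟨hlen, hw⟩, hSC, hval, hl⟩ := mem_markedFactorisations.1 hq
  have hC : C.map T.toEmbedding = C := map_toEmbedding_eq_self h.apply_eq_self
  have hw' := hw.map_conj T
  rw [hC, mul_inv_cancel_right] at hw'
  refine mem_markedFactorisations.2 ⟨⟨by simpa using hlen, hw'⟩, ?_, ?_, ?_⟩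
  · exact (map_subset_map.2 hSC).trans hC.subset
  · rintro b hb
    obtain ⟨a, haS, rfl⟩ := mem_map.1 hb
    exact (valency_map_conj T w a).trans (hval a haS)
  · rw [← hl, ← h.profile_map (sdiff_subset : C \ S ⊆ C), Finset.map_sdiff, hC]

/-- Conjugating a marked factorisation of `T` by `T` gives another one, and moves the point tested
one step along its cycle. -/
lemma LabelsCycles.card_filter_notMem_eq_of_sameCycle (h : LabelsCycles C T lab) (p : ℕ)
    {z z' : α} (hz : T.SameCycle z z') :
    #{q ∈ markedFactorisations C T lab m l | (q.1.take p).prod⁻¹ z ∉ q.2} =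
      #{q ∈ markedFactorisations C T lab m l | (q.1.take p).prod⁻¹ z' ∉ q.2} := by
  set N : α → ℕ := fun z => #{q ∈ markedFactorisations C T lab m l | (q.1.take p).prod⁻¹ z ∉ q.2}
  have hstep (a : α) : N a ≤ N (T a) := by
    refine card_le_card_of_injOn (conj T) (fun q hq => ?_) (conj_injective T).injOn
    obtain ⟨hq, hqp⟩ := mem_filter.1 hq
    refine mem_coe.2 (mem_filter.2 ⟨h.conj_mem_markedFactorisations hq, ?_⟩)
    simpa [conj, prod_take_map_conj] using hqp
  have hpow (a : α) (n : ℕ) : N a ≤ N ((T ^ n) a) := by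
    induction n with
    | zero => rfl
    | succ n ih => exact ih.trans (pow_succ' T n ▸ hstep _)
  refine le_antisymm ?_ ?_
  · obtain ⟨n, rfl⟩ := hz.exists_nat_pow_eq
    exact hpow z n
  · obtain ⟨n, rfl⟩ := hz.symm.exists_nat_pow_eq
    exact hpow z' n

omit [Finite α] [DecidableEq ι] in
lemma LabelsCycles.lab_prod_take (h : LabelsCycles C T lab) {w : List (Perm α)}
    (hw : IsFactorisation C T w) {a : α} (ha : a ∈ C) (hval : valency w a = 1) (p : ℕ) :
    lab ((w.take p).prod a) = lab a := by
  rcases prod_take_apply_eq_or_of_valency_eq_one hval p with hp | hp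
  · rw [hp]
  · rw [hp, hw.prod_eq, h.lab_apply ha]

lemma LabelsCycles.card_fibre_filter_notMem_eq (h : LabelsCycles C T lab)
    {q : List (Perm α) × Finset α} (hq : q ∈ markedFactorisations C T lab m l) (p : ℕ) (i : ι) :
    #{a ∈ {a ∈ C | lab a = i} | (q.1.take p).prod⁻¹ a ∉ q.2} = l i := by
  obtain ⟨w, S⟩ := q
  obtain ⟨⟨-, hw⟩, hSC, hval, rfl⟩ := mem_markedFactorisations.1 hq
  have hmap : {a ∈ {a ∈ C | lab a = i} | (w.take p).prod⁻¹ a ∈ S} =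
      {a ∈ S | lab a = i}.map (w.take p).prod.toEmbedding := by
    ext b
    obtain ⟨a, rfl⟩ := (w.take p).prod.surjective b
    by_cases haS : a ∈ S
    · have hlab := h.lab_prod_take hw (hSC haS) (hval a haS) p
      have hmem : (w.take p).prod a ∈ C := by
        rw [← prod_take_inv_mem_iff hw.apply_eq_self p]
        simpa using hSC haS
      simp [haS, hlab, hmem]
    · simp [haS]
  have hcard := card_filter_add_card_filter_not (s := {a ∈ C | lab a = i})
    fun a => (w.take p).prod⁻¹ a ∈ S
  rw [hmap, card_map] at hcard
  have hsdiff := profile_sdiff_add_profile hSC lab i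
  simp only [profile] at hsdiff ⊢
  omega

/-- Double counting along the cycle of `z`: every marked factorisation contributes `l (lab z)`, and
all points of the cycle contribute equally. -/
lemma LabelsCycles.profile_mul_card_filter_notMem (h : LabelsCycles C T lab) {z : α} (hz : z ∈ C)
    (p : ℕ) :
    profile C lab (lab z) *
        #{q ∈ markedFactorisations C T lab m l | (q.1.take p).prod⁻¹ z ∉ q.2} =
      l (lab z) * #(markedFactorisations C T lab m l) := by
  set M := markedFactorisations C T lab m l
  calc profile C lab (lab z) * #{q ∈ M | (q.1.take p).prod⁻¹ z ∉ q.2}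
      = ∑ a ∈ C with lab a = lab z, #{q ∈ M | (q.1.take p).prod⁻¹ a ∉ q.2} := by
        refine (sum_const_nat fun a ha => ?_).symm
        obtain ⟨haC, ha⟩ := mem_filter.1 ha
        exact h.card_filter_notMem_eq_of_sameCycle p ((h.sameCycle_iff a haC z hz).2 ha)
    _ = ∑ q ∈ M, #{a ∈ {a ∈ C | lab a = lab z} | (q.1.take p).prod⁻¹ a ∉ q.2} :=
        sum_card_bipartiteAbove_eq_sum_card_bipartiteBelow _
    _ = l (lab z) * #M := by
        rw [mul_comm, sum_const_nat fun q hq => h.card_fibre_filter_notMem_eq hq p (lab z)]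

omit [Finite α] in
lemma forall_valency_insertLeaf_eq_one_iff {x z : α} (hz : z ≠ x)
    {w : List (Perm α)} (hw : IsFactorisation (C.erase x) T w) (hne : w ≠ []) {S : Finset α}
    (hS : S ⊆ C.erase x) (p : ℕ) :
    (∀ a ∈ insert x S, valency (insertLeaf x z p w) a = 1) ↔
      (∀ a ∈ S, valency w a = 1) ∧ (w.take p).prod⁻¹ z ∉ S := by
  have hwx : ∀ s ∈ w, s x = x := fun s hs => hw.apply_eq_self s hs x (notMem_erase x C)
  have hval (a : α) (ha : a ∈ S) : valency (insertLeaf x z p w) a = 1 ↔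
      valency w a = 1 ∧ (w.take p).prod⁻¹ z ≠ a := by
    rw [valency_insertLeaf (ne_of_mem_erase (hS ha))]
    grind [hw.valency_ne_zero hne (hS ha)]
  simp only [forall_mem_insert, valency_insertLeaf_self hwx hz p, true_and]
  rw [forall₂_congr hval]
  grind

lemma insertLeaf_mem_markedFactorisations_iff {x : α} (hx : x ∈ C) (hTx : T x ∈ C.erase x)
    {w : List (Perm α)} (hw : IsFactorisation (C.erase x) (swap x (T x) * T) w) (hne : w ≠ [])
    {S : Finset α} (hxS : x ∉ S) (p : ℕ) :
    (insertLeaf x (T x) p w, insert x S) ∈ markedFactorisations C T lab (m + 1) l ↔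
      (w, S) ∈ markedFactorisations (C.erase x) (swap x (T x) * T) lab m l ∧
        (w.take p).prod⁻¹ (T x) ∉ S := by
  have hsub : insert x S ⊆ C ↔ S ⊆ C.erase x := by grind
  have hsdiff : C \ insert x S = C.erase x \ S := by grind
  simp only [mem_markedFactorisations, length_insertLeaf, add_left_inj, hw,
    (isFactorisation_insertLeaf_iff hTx hw.apply_eq_self hx p).2 hw, hsub, hsdiff]
  by_cases hS : S ⊆ C.erase x
  · rw [forall_valency_insertLeaf_eq_one_iff (ne_of_mem_erase hTx) hw hne hS]
    tauto
  · simp only [hS, false_and, and_false]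

/-- Removing the marked leaf `x` together with its letter is a bijection, once the position of that
letter is remembered. -/
lemma card_filter_mem_markedFactorisations {x : α} (hx : x ∈ C) (hTx : T x ∈ C.erase x)
    (hm : m ≠ 0) :
    #{q ∈ markedFactorisations C T lab (m + 1) l | x ∈ q.2} =
      #{r ∈ markedFactorisations (C.erase x) (swap x (T x) * T) lab m l ×ˢ range (m + 1) |
        (r.1.1.take r.2).prod⁻¹ (T x) ∉ r.1.2} := by
  set M' := markedFactorisations (C.erase x) (swap x (T x) * T) lab m l
  have hfix {w S} (hq : (w, S) ∈ M') : ∀ s ∈ w, s x = x := fun s hs =>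
    (mem_markedFactorisations.1 hq).1.2.apply_eq_self s hs x (notMem_erase x C)
  have hxS {w S} (hq : (w, S) ∈ M') : x ∉ S := fun hx =>
    notMem_erase x C ((mem_markedFactorisations.1 hq).2.1 hx)
  symm
  refine card_nbij (fun r => (insertLeaf x (T x) r.2 r.1.1, insert x r.1.2)) ?_ ?_ ?_
  · rintro ⟨⟨w, S⟩, p⟩ hr
    obtain ⟨hr, hp⟩ := mem_filter.1 hr
    have hq := (mem_product.1 hr).1
    obtain ⟨hlen, hw⟩ := (mem_markedFactorisations.1 hq).1
    have hne : w ≠ [] := List.ne_nil_of_length_pos (by omega)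
    exact mem_coe.2 (mem_filter.2 ⟨(insertLeaf_mem_markedFactorisations_iff hx hTx hw hne
      (hxS hq) p).2 ⟨hq, hp⟩, mem_insert_self x S⟩)
  · rintro ⟨⟨w, S⟩, p⟩ hr ⟨⟨w', S'⟩, p'⟩ hr' h
    obtain ⟨hq, hp⟩ := mem_product.1 (mem_filter.1 hr).1
    obtain ⟨hq', hp'⟩ := mem_product.1 (mem_filter.1 hr').1
    have hlen := (mem_markedFactorisations.1 hq).1.1
    have hlen' := (mem_markedFactorisations.1 hq').1.1
    obtain ⟨hw, hS⟩ := Prod.mk.inj h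
    obtain ⟨rfl, rfl⟩ := insertLeaf_inj (hfix hq) (hfix hq') (ne_of_mem_erase hTx)
      (by grind) (by grind) hw
    rw [← erase_insert (hxS hq), hS, erase_insert (hxS hq')]
  · rintro ⟨w, S⟩ hq
    obtain ⟨hq, hxS : x ∈ S⟩ := mem_filter.1 hq
    obtain ⟨⟨hlen, hw⟩, -, hval, -⟩ := mem_markedFactorisations.1 hq
    obtain ⟨v, p, hp, hv, rfl⟩ := hw.exists_insertLeaf_eq hx (hval x hxS)
    rw [length_insertLeaf] at hlen
    have hne : v ≠ [] := List.ne_nil_of_length_pos (by omega)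
    rw [← insert_erase hxS,
      insertLeaf_mem_markedFactorisations_iff hx hTx hv hne (notMem_erase x S)] at hq
    refine ⟨((v, S.erase x), p), mem_coe.2 (mem_filter.2 ⟨mem_product.2 ⟨hq.1, ?_⟩, hq.2⟩), ?_⟩
    · exact mem_range.2 (by omega)
    · simp only [insert_erase hxS]

/-- The count of marked factorisations in which `x` is a marked leaf, evaluated both by
equidistribution and by removing `x`. -/
lemma LabelsCycles.card_markedFactorisations_succ (h : LabelsCycles C T lab) {x : α} (hx : x ∈ C)
    (hTx : T x ≠ x) (hm : m ≠ 0) :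
    ((profile C lab (lab x) : ℚ) - l (lab x)) * (profile C lab (lab x) - 1) *
        #(markedFactorisations C T lab (m + 1) l) =
      profile C lab (lab x) * (m + 1) * l (lab x) *
        #(markedFactorisations (C.erase x) (swap x (T x) * T) lab m l) := by
  set M := markedFactorisations C T lab (m + 1) l
  set M' := markedFactorisations (C.erase x) (swap x (T x) * T) lab m l
  have hTxC : T x ∈ C.erase x := mem_erase.2 ⟨hTx, h.apply_mem_iff.2 hx⟩
  have hlab : lab (T x) = lab x := h.lab_apply hx
  have hprofile : profile (C.erase x) lab (lab x) + 1 = profile C lab (lab x) := by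
    simp [← profile_erase_add_single hx lab]
  have hM : profile C lab (lab x) * #{q ∈ M | x ∉ q.2} = l (lab x) * #M :=
    h.profile_mul_card_filter_notMem hx 0
  have hsplit : #{q ∈ M | x ∈ q.2} + #{q ∈ M | x ∉ q.2} = #M :=
    card_filter_add_card_filter_not _
  have hM' (p : ℕ) : profile (C.erase x) lab (lab x) *
      #{q ∈ M' | (q.1.take p).prod⁻¹ (T x) ∉ q.2} = l (lab x) * #M' := by
    rw [← hlab]
    exact (h.erase hTx).profile_mul_card_filter_notMem hTxC p
  have hremove : profile (C.erase x) lab (lab x) * #{q ∈ M | x ∈ q.2} =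
      (m + 1) * (l (lab x) * #M') := by
    rw [card_filter_mem_markedFactorisations hx hTxC hm, card_filter,
      sum_product_right]
    simp_rw [← card_filter]
    rw [mul_sum, sum_congr rfl fun p _ => hM' p, sum_const, card_range, smul_eq_mul]
  rw [← hprofile] at hM ⊢
  qify at *
  linear_combination (profile (C.erase x) lab (lab x) + 1 : ℚ) * hremove +
    profile (C.erase x) lab (lab x) * hM -
    (profile (C.erase x) lab (lab x) + 1 : ℚ) * profile (C.erase x) lab (lab x) * hsplit

lemma LabelsCycles.ne_zero_of_mem_markedFactorisations (h : LabelsCycles C T lab) (hm : #C ≤ m)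
    {q : List (Perm α) × Finset α} (hq : q ∈ markedFactorisations C T lab m l) {x : α}
    (hx : x ∈ C) : l (lab x) ≠ 0 := by
  intro hl
  obtain ⟨w, S⟩ := q
  obtain ⟨⟨-, hw⟩, -, hval, hS⟩ := mem_markedFactorisations.1 hq
  have hxS : x ∈ S := by
    by_contra hxS
    have hpos : 0 < profile (C \ S) lab (lab x) := profile_pos_iff.2 ⟨x, by simp [hx, hxS], rfl⟩
    rw [hS, hl] at hpos
    exact hpos.false
  have hTx : T x ≠ x := hw.prod_eq ▸ prod_apply_ne_of_valency_eq_one (hval x hxS)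
  have hprofile : 1 < profile C lab (lab x) := (h.apply_ne_self_iff hx).1 hTx
  have hcard : profile C lab (lab x) ≤ #C := card_filter_le _ _
  obtain ⟨m, rfl⟩ : ∃ k, m = k + 1 := ⟨m - 1, by omega⟩
  have hrec := h.card_markedFactorisations_succ (l := l) hx hTx (m := m) (by omega)
  have hM : (#(markedFactorisations C T lab (m + 1) l) : ℚ) ≠ 0 := by
    exact_mod_cast (card_pos.2 ⟨_, hq⟩).ne'
  have hprofile' : (1 : ℚ) < profile C lab (lab x) := by exact_mod_cast hprofile
  rw [hl, Nat.cast_zero, sub_zero, mul_zero, zero_mul] at hrec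
  exact mul_ne_zero (mul_ne_zero (by positivity) (sub_ne_zero.2 hprofile'.ne')) hM hrec

/-- The factor contributed by one cycle to the proportion between marked factorisations of a
permutation and factorisations of the permutation left after deleting the marked leaves: `a` is the
length of the cycle and `b` the number of its unmarked points. Only `1 ≤ b ≤ a` is meaningful. -/
def leafWeight (a b : ℕ) : ℚ :=
  a * (b : ℚ) ^ (a - b) / (b * (a - b)!)

lemma leafWeight_self {a : ℕ} (ha : a ≠ 0) : leafWeight a a = 1 := by
  simp [leafWeight, ha]

lemma leafWeight_succ {a b : ℕ} (hb : b ≠ 0) (hba : b ≤ a) :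
    ((a + 1 : ℚ) - b) * a * leafWeight (a + 1) b = (a + 1) * b * leafWeight a b := by
  have hsub : a + 1 - b = a - b + 1 := by omega
  have hcast : ((a + 1 : ℚ) - b) = (a - b : ℕ) + 1 := by push_cast [hba]; ring
  have hb' : (b : ℚ) ≠ 0 := Nat.cast_ne_zero.2 hb
  rw [leafWeight, leafWeight, hsub, hcast, Nat.factorial_succ]
  push_cast
  field_simp
  ring

lemma markedFactorisations_profile (C : Finset α) (T : Perm α) (lab : α → ι) (m : ℕ) :
    markedFactorisations C T lab m (profile C lab) = factorisations C T m ×ˢ {∅} := by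
  ext ⟨w, S⟩
  rw [mem_markedFactorisations, mem_product, mem_factorisations, mem_singleton]
  refine and_congr_right fun _ => ⟨fun ⟨hSC, _, hS⟩ => ?_, fun hS => ?_⟩
  · refine eq_empty_of_forall_notMem fun x hx => ?_
    have hpos : 0 < profile S lab (lab x) := profile_pos_iff.2 ⟨x, hx, rfl⟩
    have hsum := profile_sdiff_add_profile hSC lab (lab x)
    rw [hS] at hsum
    omega
  · simp only [show S = ∅ from hS, empty_subset, notMem_empty, IsEmpty.forall_iff, implies_true,
      sdiff_empty, and_self]

omit [Finite α] in
lemma le_profile_erase {x : α} (hx : x ∈ C) (hl : l ≤ profile C lab)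
    (hlx : l (lab x) < profile C lab (lab x)) : l ≤ profile (C.erase x) lab := fun i => by
  have hi := congrFun (profile_erase_add_single hx lab) i
  rw [Pi.add_apply, Pi.single_apply] at hi
  split_ifs at hi with hix
  · subst hix
    exact Nat.le_of_lt_succ (hlx.trans_eq hi.symm)
  · exact (hl i).trans hi.ge

variable [Fintype ι]

lemma prod_leafWeight_add_single {a : ι → ℕ} {i : ι} (hl : ∀ i, l i ≠ 0) (hi : l i ≤ a i) :
    ((a i + 1 : ℚ) - l i) * a i * ∏ j, leafWeight ((a + Pi.single i 1 : ι → ℕ) j) (l j) =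
      (a i + 1) * l i * ∏ j, leafWeight (a j) (l j) := by
  have herase : ∏ j ∈ univ.erase i, leafWeight ((a + Pi.single i 1 : ι → ℕ) j) (l j) =
      ∏ j ∈ univ.erase i, leafWeight (a j) (l j) :=
    prod_congr rfl fun j hj => by simp [ne_of_mem_erase hj]
  rw [← mul_prod_erase univ _ (mem_univ i), ← mul_prod_erase univ _ (mem_univ i), herase,
    Pi.add_apply, Pi.single_eq_same, ← mul_assoc, leafWeight_succ (hl i) hi, mul_assoc]

lemma card_markedFactorisations_div_factorial {e : ℕ} {h : ℚ} (hl : ∀ i, l i ≠ 0)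
    (hbase : ∀ C T, LabelsCycles C T lab → profile C lab = l →
      #(factorisations C T (#C + e)) / ((#C + e)! : ℚ) = h)
    (hT : LabelsCycles C T lab) (hC : l ≤ profile C lab) :
    #(markedFactorisations C T lab (#C + e) l) / ((#C + e)! : ℚ) =
      h * ∏ i, leafWeight (profile C lab i) (l i) := by
  induction C using Finset.strongInduction generalizing T with
  | H C ih =>
  rcases hC.eq_or_lt with rfl | hlt
  · rw [markedFactorisations_profile, card_product, card_singleton, mul_one, hbase C T hT rfl,
      prod_eq_one fun i _ => leafWeight_self (hl i), mul_one]
  obtain ⟨-, i, hi⟩ := Pi.lt_def.1 hlt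
  obtain ⟨x, hx, rfl⟩ := profile_pos_iff.1 (Nat.zero_lt_of_lt hi)
  have hTx : T x ≠ x := (hT.apply_ne_self_iff hx).2
    (lt_of_le_of_lt (Nat.one_le_iff_ne_zero.2 (hl (lab x))) hi)
  have hTxC : T x ∈ C.erase x := mem_erase.2 ⟨hTx, hT.apply_mem_iff.2 hx⟩
  have hpos : profile (C.erase x) lab (lab x) ≠ 0 :=
    (profile_pos_iff.2 ⟨T x, hTxC, hT.lab_apply hx⟩).ne'
  have hprofile := profile_erase_add_single hx lab
  have hle : l ≤ profile (C.erase x) lab := le_profile_erase hx hC hi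
  have hm : #C + e = #(C.erase x) + e + 1 := by rw [← card_erase_add_one hx]; ring
  have hrec := hT.card_markedFactorisations_succ (l := l) (m := #(C.erase x) + e) hx hTx
    (by have := card_pos.2 ⟨_, hTxC⟩; omega)
  have hprod := prod_leafWeight_add_single hl (hle (lab x))
  have hih := ih (C.erase x) (erase_ssubset hx) (hT.erase hTx) hle
  have hfactor : (profile (C.erase x) lab (lab x) + 1 - l (lab x) : ℚ) *
      profile (C.erase x) lab (lab x) ≠ 0 := by
    have hle' : (l (lab x) : ℚ) ≤ profile (C.erase x) lab (lab x) := by exact_mod_cast hle (lab x)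
    exact mul_ne_zero (by linarith) (Nat.cast_ne_zero.2 hpos)
  rw [div_eq_iff (by positivity)] at hih
  refine mul_left_cancel₀ hfactor ?_
  rw [← hprofile, hm, Nat.factorial_succ]
  simp only [← hprofile, Pi.add_apply, Pi.single_eq_same] at hrec hprod ⊢
  push_cast at hrec hprod ⊢
  rw [hih] at hrec
  rw [mul_div_assoc', div_eq_iff (by positivity)]
  linear_combination hrec - h * (#(C.erase x) + e + 1 : ℚ) * (#(C.erase x) + e)! * hprod

omit [Finite α] [Fintype ι] [DecidableEq ι] in
lemma sum_neg_one_pow_card_of_forall_valency_eq_one {w : List (Perm α)}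
    (hw : ∀ a ∈ C, valency w a ≠ 0) :
    ∑ S ∈ C.powerset with ∀ a ∈ S, valency w a = 1, (-1 : ℤ) ^ #S =
      if ∀ a ∈ C, 2 ≤ valency w a then 1 else 0 := by
  have hpowerset : {S ∈ C.powerset | ∀ a ∈ S, valency w a = 1} =
      {a ∈ C | valency w a = 1}.powerset := by
    ext S
    simp only [mem_filter, mem_powerset, subset_iff]
    grind
  have hempty : {a ∈ C | valency w a = 1} = ∅ ↔ ∀ a ∈ C, 2 ≤ valency w a := by
    rw [filter_eq_empty_iff]
    exact forall₂_congr fun a ha => by have := hw a ha; omega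
  rw [hpowerset, sum_powerset_neg_one_pow_card]
  simp only [hempty]

omit [Finite α] in
lemma neg_one_pow_card_eq_prod {S : Finset α} (hS : S ⊆ C) (lab : α → ι) :
    (-1 : ℤ) ^ #S = ∏ i, (-1) ^ (profile C lab i - profile (C \ S) lab i) := by
  rw [prod_pow_eq_pow_sum, ← sum_profile S lab]
  congr 1
  refine sum_congr rfl fun i _ => ?_
  have := profile_sdiff_add_profile hS lab i
  omega

lemma LabelsCycles.mem_piFinset_of_mem_markedFactorisations (h : LabelsCycles C T lab)
    (hm : #C ≤ m) (hprofile : ∀ i, profile C lab i ≠ 0) {q : List (Perm α) × Finset α}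
    (hq : q ∈ markedFactorisations C T lab m l) :
    l ∈ Fintype.piFinset fun i => Icc 1 (profile C lab i) := by
  refine Fintype.mem_piFinset.2 fun i => mem_Icc.2 ⟨?_, ?_⟩
  · obtain ⟨x, hx, rfl⟩ := profile_pos_iff.1 (Nat.pos_of_ne_zero (hprofile i))
    exact Nat.one_le_iff_ne_zero.2 (h.ne_zero_of_mem_markedFactorisations hm hq hx)
  · obtain ⟨-, -, -, rfl⟩ := mem_markedFactorisations.1 hq
    exact profile_mono sdiff_subset lab i

lemma LabelsCycles.card_filter_two_le_valency (h : LabelsCycles C T lab) (hm : #C ≤ m)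
    (hprofile : ∀ i, profile C lab i ≠ 0) (hC : C.Nonempty) :
    (#{w ∈ factorisations C T m | ∀ a ∈ C, 2 ≤ valency w a} : ℤ) =
      ∑ l ∈ Fintype.piFinset fun i => Icc 1 (profile C lab i),
        (#(markedFactorisations C T lab m l) : ℤ) * ∏ i, (-1) ^ (profile C lab i - l i) := by
  set Q : Finset (List (Perm α) × Finset α) :=
    {q ∈ factorisations C T m ×ˢ C.powerset | ∀ a ∈ q.2, valency q.1 a = 1} with hQ
  have hM (l : ι → ℕ) : {q ∈ Q | profile (C \ q.2) lab = l} = markedFactorisations C T lab m l := by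
    ext ⟨w, S⟩
    simp only [hQ, mem_markedFactorisations, mem_filter, mem_product, mem_factorisations,
      mem_powerset, and_assoc]
  have hvalency (w) (hw : w ∈ factorisations C T m) (a) (ha : a ∈ C) : valency w a ≠ 0 := by
    obtain ⟨hlen, hw⟩ := mem_factorisations.1 hw
    exact hw.valency_ne_zero (List.ne_nil_of_length_pos (by have := hC.card_pos; omega)) ha
  calc (#{w ∈ factorisations C T m | ∀ a ∈ C, 2 ≤ valency w a} : ℤ)
      = ∑ w ∈ factorisations C T m, ∑ S ∈ C.powerset with ∀ a ∈ S, valency w a = 1,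
          (-1 : ℤ) ^ #S := by
        rw [natCast_card_filter]
        exact sum_congr rfl fun w hw =>
          (sum_neg_one_pow_card_of_forall_valency_eq_one (hvalency w hw)).symm
    _ = ∑ q ∈ Q, (-1 : ℤ) ^ #q.2 := by
        refine (sum_finset_product Q _ _ (fun q => ?_) (f := fun q => (-1 : ℤ) ^ #q.2)).symm
        simp only [hQ, mem_filter, mem_product, and_assoc]
    _ = ∑ l ∈ Fintype.piFinset fun i => Icc 1 (profile C lab i),
          ∑ q ∈ Q with profile (C \ q.2) lab = l, (-1 : ℤ) ^ #q.2 :=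
        (sum_fiberwise_of_maps_to (fun q hq => h.mem_piFinset_of_mem_markedFactorisations hm
          hprofile (hM _ ▸ mem_filter.2 ⟨hq, rfl⟩ : q ∈ markedFactorisations C T lab m _)) _).symm
    _ = ∑ l ∈ Fintype.piFinset fun i => Icc 1 (profile C lab i),
          (#(markedFactorisations C T lab m l) : ℤ) * ∏ i, (-1) ^ (profile C lab i - l i) := by
        refine sum_congr rfl fun l _ => ?_
        rw [← nsmul_eq_mul, ← hM, ← sum_const]
        refine sum_congr rfl fun q hq => ?_
        obtain ⟨-, hqC, -, rfl⟩ := mem_markedFactorisations.1 (hM l ▸ hq)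
        exact neg_one_pow_card_eq_prod hqC lab

end MarkedFactorisations

section Inversion

lemma sum_range_natCast_mul_pow_mul_choose {R : Type*} [CommSemiring R] (x y : R) (n : ℕ) :
    ∑ j ∈ range (n + 1), (j : R) * (x ^ j * y ^ (n - j) * n.choose j) =
      n * x * (x + y) ^ (n - 1) := by
  obtain _ | n := n
  · simp
  rw [sum_range_succ', Nat.cast_zero, zero_mul, add_zero, Nat.add_sub_cancel, add_pow, mul_sum]
  refine sum_congr rfl fun j _ => ?_
  have hchoose : ((n + 1 : ℕ) : R) * n.choose j = (n + 1).choose (j + 1) * (j + 1 : ℕ) := by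
    exact_mod_cast congrArg (Nat.cast (R := R)) (Nat.add_one_mul_choose_eq n j)
  calc ((j + 1 : ℕ) : R) * (x ^ (j + 1) * y ^ (n + 1 - (j + 1)) * (n + 1).choose (j + 1))
      = x ^ (j + 1) * y ^ (n - j) * ((n + 1).choose (j + 1) * (j + 1 : ℕ)) := by
        rw [Nat.add_sub_add_right]; ring
    _ = (n + 1 : ℕ) * x * (x ^ j * y ^ (n - j) * n.choose j) := by
        rw [← hchoose]; ring

lemma pow_div_factorial_mul_leafWeight (c : ℚ) {b n j : ℕ} (hb : b ≠ 0) (hj : j ≤ n) :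
    c ^ (n - j) / (n - j)! * ((-1) ^ j * leafWeight (b + j) b) =
      (n ! : ℚ)⁻¹ * ((-b) ^ j * c ^ (n - j) * n.choose j +
        (b : ℚ)⁻¹ * (j * ((-b) ^ j * c ^ (n - j) * n.choose j))) := by
  have hb' : (b : ℚ) ≠ 0 := Nat.cast_ne_zero.2 hb
  rw [leafWeight, Nat.add_sub_cancel_left, Nat.cast_choose ℚ hj, neg_pow (b : ℚ)]
  push_cast
  field_simp

lemma sum_Icc_pow_div_factorial_mul_leafWeight {a b : ℕ} (hb : b ≠ 0) (hba : b ≤ a) :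
    ∑ v ∈ Icc b a, (a : ℚ) ^ (a - v) / (a - v)! * ((-1) ^ (v - b) * leafWeight v b) =
      if b = a then 1 else 0 := by
  obtain ⟨n, rfl⟩ := Nat.exists_eq_add_of_le hba
  have hb' : (b : ℚ) ≠ 0 := Nat.cast_ne_zero.2 hb
  have hsum : -(b : ℚ) + (b + n : ℕ) = n := by push_cast; ring
  rw [← Ico_add_one_right_eq_Icc, sum_Ico_eq_sum_range, add_assoc, Nat.add_sub_cancel_left]
  simp only [Nat.add_sub_add_left, Nat.add_sub_cancel_left]
  rw [sum_congr rfl fun j hj => pow_div_factorial_mul_leafWeight ((b + n : ℕ) : ℚ) hb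
      (Nat.lt_add_one_iff.1 (mem_range.1 hj)), ← mul_sum, sum_add_distrib, ← mul_sum, ← add_pow,
    sum_range_natCast_mul_pow_mul_choose, hsum]
  obtain _ | n := n
  · simp
  · rw [if_neg (by omega), Nat.add_sub_cancel]
    field_simp
    ring

lemma eq_sum_of_eq_sum_leafWeight {ι : Type*} [Fintype ι] [DecidableEq ι] {η κ : (ι → ℕ) → ℚ}
    (hκ : ∀ ν : ι → ℕ, (∀ i, 1 ≤ ν i) → κ ν = ∑ l ∈ Fintype.piFinset fun i => Icc 1 (ν i),
      η l * ∏ i, (-1) ^ (ν i - l i) * leafWeight (ν i) (l i))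
    {μ : ι → ℕ} (hμ : ∀ i, 1 ≤ μ i) :
    η μ = ∑ ν ∈ Fintype.piFinset fun i => Icc 1 (μ i),
      κ ν * ∏ i, (μ i : ℚ) ^ (μ i - ν i) / (μ i - ν i)! := by
  set summand : ι → ℕ → ℕ → ℚ := fun i b v =>
    (μ i : ℚ) ^ (μ i - v) / (μ i - v)! * ((-1) ^ (v - b) * leafWeight v b)
  symm
  calc ∑ ν ∈ Fintype.piFinset fun i => Icc 1 (μ i),
        κ ν * ∏ i, (μ i : ℚ) ^ (μ i - ν i) / (μ i - ν i)!
      = ∑ ν ∈ Fintype.piFinset fun i => Icc 1 (μ i),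
          ∑ l ∈ Fintype.piFinset fun i => Icc 1 (ν i), η l * ∏ i, summand i (l i) (ν i) := by
        refine sum_congr rfl fun ν hν => ?_
        rw [hκ ν fun i => (mem_Icc.1 (Fintype.mem_piFinset.1 hν i)).1, sum_mul]
        refine sum_congr rfl fun l _ => ?_
        rw [mul_assoc, mul_comm (∏ i, _), ← prod_mul_distrib]
    _ = ∑ l ∈ Fintype.piFinset fun i => Icc 1 (μ i),
          ∑ ν ∈ Fintype.piFinset fun i => Icc (l i) (μ i), η l * ∏ i, summand i (l i) (ν i) := by
        refine sum_comm' fun ν l => ?_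
        simp only [Fintype.mem_piFinset, mem_Icc, ← forall_and]
        exact forall_congr' fun i => by omega
    _ = ∑ l ∈ Fintype.piFinset fun i => Icc 1 (μ i), η l * if l = μ then 1 else 0 := by
        refine sum_congr rfl fun l hl => ?_
        have hl i : 1 ≤ l i ∧ l i ≤ μ i := mem_Icc.1 (Fintype.mem_piFinset.1 hl i)
        rw [← mul_sum, ← prod_univ_sum, prod_congr rfl fun i _ =>
          sum_Icc_pow_div_factorial_mul_leafWeight (by have := hl i; omega) (hl i).2,
          prod_ite_zero, prod_const_one]
        simp only [mem_univ, true_imp_iff, funext_iff]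
    _ = η μ := by
        simp [hμ]

end Inversion

section ExtendDomain

variable {α β : Type*} [DecidableEq α] {C : Finset α} (f : β ≃ {a // a ∈ C})

lemma exists_extendDomain_eq {s : Perm α} (hs : ∀ a ∉ C, s a = a) :
    ∃ t : Perm β, t.extendDomain f = s := by
  refine ⟨f.symm.permCongr (s.subtypePerm fun a => apply_mem_iff hs), Perm.ext fun a => ?_⟩
  by_cases ha : a ∈ C
  · obtain ⟨b, hb⟩ := f.surjective ⟨a, ha⟩
    obtain rfl : (f b : α) = a := congrArg Subtype.val hb
    simp
  · rw [Perm.extendDomain_apply_not_subtype _ _ ha, hs a ha]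

lemma isTransitiveOn_image_extendDomainHom_iff (L : Set (Perm β)) :
    IsTransitiveOn (Perm.extendDomainHom f '' L) C ↔
      ∀ x y, ∃ g ∈ Subgroup.closure L, g x = y := by
  have happly (g : Perm β) (x : β) : Perm.extendDomainHom f g (f x) = f (g x) :=
    Perm.extendDomain_apply_image g f x
  rw [IsTransitiveOn, ← MonoidHom.map_closure]
  constructor
  · intro h x y
    obtain ⟨-, ⟨g, hg, rfl⟩, hxy⟩ := h (f x) (f x).2 (f y) (f y).2
    rw [happly] at hxy
    exact ⟨g, hg, f.injective (Subtype.ext hxy)⟩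
  · intro h a ha b hb
    obtain ⟨x, hx⟩ := f.surjective ⟨a, ha⟩
    obtain ⟨y, hy⟩ := f.surjective ⟨b, hb⟩
    obtain rfl : (f x : α) = a := congrArg Subtype.val hx
    obtain rfl : (f y : α) = b := congrArg Subtype.val hy
    obtain ⟨g, hg, rfl⟩ := h x y
    exact ⟨_, Subgroup.mem_map_of_mem _ hg, happly g x⟩

/-- The word on `C` obtained from a tuple of permutations of `β` by transport along `f`. -/
def extendWord {m : ℕ} (σ : Fin m → Perm β) : List (Perm α) :=
  List.ofFn fun i => (σ i).extendDomain f

lemma extendWord_injective (m : ℕ) : Function.Injective (extendWord f (m := m)) :=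
  fun _ _ h => funext fun i =>
    Perm.extendDomainHom_injective f (congrFun (List.ofFn_injective h) i)

lemma exists_extendWord_eq {w : List (Perm α)} (hw : ∀ s ∈ w, ∀ a ∉ C, s a = a) :
    ∃ σ : Fin w.length → Perm β, extendWord f σ = w := by
  choose σ hσ using fun i : Fin w.length => exists_extendDomain_eq f (hw w[i] (by simp))
  exact ⟨σ, by simp [extendWord, hσ]⟩

lemma card_subtype_eq_card_of_mem_extendWord [Finite α] {T : Perm α} {m : ℕ}
    {S : Finset (List (Perm α))} (hS : S ⊆ factorisations C T m) {P : (Fin m → Perm β) → Prop}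
    (hP : ∀ σ, extendWord f σ ∈ S ↔ P σ) : Nat.card {σ // P σ} = #S := by
  rw [← Nat.card_eq_finsetCard]
  refine Nat.card_eq_of_bijective (fun σ => ⟨extendWord f σ.1, (hP _).2 σ.2⟩) ⟨?_, ?_⟩
  · intro σ τ h
    exact Subtype.ext (extendWord_injective f m (congrArg Subtype.val h))
  · rintro ⟨w, hw⟩
    obtain ⟨rfl, hfac⟩ := mem_factorisations.1 (hS hw)
    obtain ⟨σ, hσ⟩ := exists_extendWord_eq f hfac.apply_eq_self
    exact ⟨⟨σ, (hP σ).1 (hσ.symm ▸ hw)⟩, Subtype.ext hσ⟩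

lemma countP_ofFn {γ : Type*} {m : ℕ} (p : γ → Bool) (g : Fin m → γ) :
    (List.ofFn g).countP p = #{i | p (g i)} := by
  rw [List.ofFn_eq_map, List.countP_map, card_def, filter_val, ← Multiset.countP_eq_card_filter,
    Fin.univ_def, Multiset.coe_countP]
  simp only [Function.comp_def, Bool.decide_eq_true]

lemma valency_extendWord {m : ℕ} (σ : Fin m → Perm β) (x : β) :
    valency (extendWord f σ) (f x) = Nat.card {i // σ i x ≠ x} := by
  classical
  have hmove (i) : (σ i).extendDomain f (f x) ≠ f x ↔ σ i x ≠ x := by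
    rw [Perm.extendDomain_apply_image, Ne, Subtype.coe_inj, f.injective.eq_iff]
  rw [valency, extendWord, Nat.card_eq_fintype_card, Fintype.card_subtype, countP_ofFn]
  simp only [decide_eq_true_eq, hmove]

lemma isFactorisation_extendWord_iff [Finite α] {d m : ℕ} (f : Fin d ≃ {a // a ∈ C})
    {T : Perm (Fin d)} {σ : Fin m → Perm (Fin d)} :
    IsFactorisation C (T.extendDomain f) (extendWord f σ) ↔ IsSimpleFactorisation T σ := by
  cases nonempty_fintype α
  have hswap (s : Perm (Fin d)) : (s.extendDomain f).IsSwap ↔ s.IsSwap := by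
    rw [Perm.isSwap_iff_cycleType, Perm.isSwap_iff_cycleType, Perm.cycleType_extendDomain]
  have hprod : (extendWord f σ).prod = (List.ofFn σ).prod.extendDomain f := by
    have h := map_list_prod (Perm.extendDomainHom f) (List.ofFn σ)
    rw [List.map_ofFn] at h
    exact h.symm
  have hletters : {s | s ∈ extendWord f σ} = Perm.extendDomainHom f '' Set.range σ := by
    ext s
    simp [extendWord, List.mem_ofFn']
  constructor
  · intro h
    refine ⟨fun i => ?_, ?_, ?_⟩
    · exact (hswap _).1 (h.isSwap _ (by simp [extendWord]))
    · exact Perm.extendDomainHom_injective f (hprod.symm.trans h.prod_eq)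
    · exact (isTransitiveOn_image_extendDomainHom_iff f _).1 (hletters ▸ h.isTransitiveOn)
  · rintro ⟨hσ, rfl, htrans⟩
    refine ⟨?_, ?_, hprod, ?_⟩
    · simpa [extendWord, List.forall_mem_ofFn_iff, hswap] using hσ
    · simpa [extendWord, List.forall_mem_ofFn_iff] using
        fun i a ha => Perm.extendDomain_apply_not_subtype _ _ ha
    · exact hletters ▸ (isTransitiveOn_image_extendDomainHom_iff f _).2 htrans

end ExtendDomain

section CycleType

variable {α ι : Type*} [DecidableEq α] [Fintype α] [DecidableEq ι] {C : Finset α} {T : Perm α}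
  {lab : α → ι}

lemma LabelsCycles.support_cycleOf (h : LabelsCycles C T lab) {x : α} (hx : T x ≠ x) :
    (T.cycleOf x).support = {a ∈ C | lab a = lab x} := by
  have hxC := h.mem_of_apply_ne_self hx
  ext a
  rw [Perm.mem_support_cycleOf_iff' hx, mem_filter]
  constructor
  · intro hxa
    have haC := h.mem_of_apply_ne_self fun ha => hx (hxa.apply_eq_self_iff.2 ha)
    exact ⟨haC, ((h.sameCycle_iff x hxC a haC).1 hxa).symm⟩
  · rintro ⟨haC, hax⟩
    exact (h.sameCycle_iff x hxC a haC).2 hax.symm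

variable [Fintype ι]

lemma LabelsCycles.image_cycleOf_eq (h : LabelsCycles C T lab) {r : ι → α} (hrC : ∀ i, r i ∈ C)
    (hr : ∀ i, lab (r i) = i) :
    image (fun i => T.cycleOf (r i)) {i | 2 ≤ profile C lab i} = T.cycleFactorsFinset := by
  have hmove (i : ι) : T (r i) ≠ r i ↔ 2 ≤ profile C lab i := by
    rw [h.apply_ne_self_iff (hrC i), hr, Nat.lt_iff_add_one_le]
  ext c
  simp only [mem_image, mem_filter, mem_univ, true_and, ← hmove]
  constructor
  · rintro ⟨i, hi, rfl⟩
    exact Perm.cycleOf_mem_cycleFactorsFinset_iff.2 (Perm.mem_support.2 hi)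
  · intro hc
    obtain ⟨a, ha⟩ := (Perm.mem_cycleFactorsFinset_iff.1 hc).1.nonempty_support
    have hTa : T a ≠ a := Perm.mem_support.1 (Perm.mem_cycleFactorsFinset_support_le hc ha)
    have hcycle : T.SameCycle a (r (lab a)) :=
      (h.sameCycle_iff a (h.mem_of_apply_ne_self hTa) _ (hrC _)).2 (hr _).symm
    exact ⟨lab a, fun hfix => hTa (hcycle.apply_eq_self_iff.2 hfix),
      hcycle.cycleOf_eq.symm.trans (Perm.cycle_is_cycleOf ha hc).symm⟩

lemma LabelsCycles.cycleType_eq (h : LabelsCycles C T lab) (hprofile : ∀ i, profile C lab i ≠ 0) :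
    T.cycleType = (Multiset.map (profile C lab) univ.val).filter (2 ≤ ·) := by
  choose r hrC hr using fun i => profile_pos_iff.1 (Nat.pos_of_ne_zero (hprofile i))
  have hsupport {i} (hi : 2 ≤ profile C lab i) :
      (T.cycleOf (r i)).support = {a ∈ C | lab a = i} := by
    have hmove : T (r i) ≠ r i := (h.apply_ne_self_iff (hrC i)).2 (by rwa [hr])
    rw [h.support_cycleOf hmove, hr]
  have hinj : Set.InjOn (fun i => T.cycleOf (r i)) ({i | 2 ≤ profile C lab i} : Finset ι) := by
    intro i hi j hj hij
    have hfibre : {a ∈ C | lab a = i} = ({a ∈ C | lab a = j} : Finset α) := by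
      rw [← hsupport (by simpa using hi), ← hsupport (by simpa using hj)]
      exact congrArg Perm.support hij
    have hri : r i ∈ ({a ∈ C | lab a = j} : Finset α) := by simp [← hfibre, hrC, hr]
    rw [← hr i, (mem_filter.1 hri).2]
  rw [Perm.cycleType_def, ← h.image_cycleOf_eq hrC hr, image_val_of_injOn hinj, Multiset.map_map,
    Multiset.filter_map]
  refine Multiset.map_congr rfl fun i hi => ?_
  exact congrArg card (hsupport (Multiset.mem_filter.1 hi).2)

end CycleType

section Hurwitz

variable {α ι : Type*} [DecidableEq α] [Finite α] [Fintype ι] [DecidableEq ι] {C : Finset α}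
  {T : Perm α} {lab : α → ι} {H K : ℕ → Multiset ℕ → ℚ} {g e : ℕ}

lemma LabelsCycles.exists_extendDomain_eq (h : LabelsCycles C T lab)
    (hprofile : ∀ i, profile C lab i ≠ 0) :
    ∃ (f : Fin (Multiset.map (profile C lab) univ.val).sum ≃ {a // a ∈ C}) (T₀ : Perm (Fin _)),
      T₀.extendDomain f = T ∧
        T₀.cycleType = (Multiset.map (profile C lab) univ.val).filter (2 ≤ ·) := by
  cases nonempty_fintype α
  let f : Fin (Multiset.map (profile C lab) univ.val).sum ≃ {a // a ∈ C} :=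
    (finCongr (sum_profile C lab)).trans C.equivFin.symm
  obtain ⟨T₀, hT₀⟩ := Pruning.exists_extendDomain_eq f h.apply_eq_self
  exact ⟨f, T₀, hT₀, by rw [← h.cycleType_eq hprofile, ← hT₀, Perm.cycleType_extendDomain]⟩

omit [DecidableEq α] [Finite α] in
lemma card_transpositions_eq (he : 2 * g + Fintype.card ι = e + 2) (C : Finset α)
    (lab : α → ι) :
    2 * g + Multiset.card (Multiset.map (profile C lab) univ.val) +
      (Multiset.map (profile C lab) univ.val).sum - 2 = #C + e := by
  have hsum : (Multiset.map (profile C lab) univ.val).sum = #C := sum_profile C lab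
  have hcard : Multiset.card (Multiset.map (profile C lab) univ.val) = Fintype.card ι := by
    rw [Multiset.card_map, card_val, card_univ]
  omega

lemma hurwitz_profile_eq (hH : IsNormalisedSimpleHurwitz H)
    (he : 2 * g + Fintype.card ι = e + 2) (h : LabelsCycles C T lab)
    (hprofile : ∀ i, profile C lab i ≠ 0) :
    H g (Multiset.map (profile C lab) univ.val) =
      #(factorisations C T (#C + e)) / ((#C + e)! : ℚ) := by
  obtain ⟨f, T₀, rfl, hT₀⟩ := h.exists_extendDomain_eq hprofile
  rw [hH g _ (by simpa [Nat.one_le_iff_ne_zero] using hprofile) T₀ hT₀,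
    card_transpositions_eq he, card_subtype_eq_card_of_mem_extendWord f subset_rfl fun σ => ?_]
  rw [mem_factorisations, isFactorisation_extendWord_iff]
  simp [extendWord]

lemma prunedHurwitz_profile_eq (hK : IsNormalisedPrunedHurwitz K)
    (he : 2 * g + Fintype.card ι = e + 2) (h : LabelsCycles C T lab)
    (hprofile : ∀ i, profile C lab i ≠ 0) :
    K g (Multiset.map (profile C lab) univ.val) =
      #{w ∈ factorisations C T (#C + e) | ∀ a ∈ C, 2 ≤ valency w a} / ((#C + e)! : ℚ) := by
  obtain ⟨f, T₀, rfl, hT₀⟩ := h.exists_extendDomain_eq hprofile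
  rw [hK g _ (by simpa [Nat.one_le_iff_ne_zero] using hprofile) T₀ hT₀,
    card_transpositions_eq he,
    card_subtype_eq_card_of_mem_extendWord f
      (S := {w ∈ factorisations C _ (#C + e) | ∀ a ∈ C, 2 ≤ valency w a}) (filter_subset _ _)
      fun σ => ?_]
  have hvalency : (∀ a ∈ C, 2 ≤ valency (extendWord f σ) a) ↔
      ∀ x, 2 ≤ Nat.card {i // σ i x ≠ x} := by
    simp_rw [← valency_extendWord f]
    refine ⟨fun h x => h (f x) (f x).2, fun h a ha => ?_⟩
    obtain ⟨x, hx⟩ := f.surjective ⟨a, ha⟩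
    obtain rfl : (f x : α) = a := congrArg Subtype.val hx
    exact h x
  rw [mem_filter, mem_factorisations, isFactorisation_extendWord_iff, hvalency,
    IsPrunedFactorisation]
  simp [extendWord]

omit [DecidableEq ι] in
lemma exists_labelsCycles (ν : ι → ℕ) :
    ∃ T : Perm (Σ i, Fin (ν i)), LabelsCycles univ T Sigma.fst := by
  choose c hc _ using fun i => exists_cycleOn (univ : Finset (Fin (ν i)))
  refine ⟨Perm.sigmaCongrRightHom _ c, by simp, ?_⟩
  have hzpow (k : ℤ) (x : Σ i, Fin (ν i)) :
      (Perm.sigmaCongrRightHom _ c ^ k) x = ⟨x.1, (c x.1 ^ k) x.2⟩ := by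
    rw [← map_zpow]
    rfl
  rintro ⟨i, a⟩ - ⟨j, b⟩ -
  constructor
  · rintro ⟨k, hk⟩
    rw [hzpow] at hk
    simpa using congrArg Sigma.fst hk
  · rintro (rfl : i = j)
    obtain ⟨k, hk⟩ := (hc i).2 (mem_coe.2 (mem_univ a)) (mem_coe.2 (mem_univ b))
    exact ⟨k, by rw [hzpow, hk]⟩

lemma profile_univ_sigma_fst (ν : ι → ℕ) :
    profile (univ : Finset (Σ i, Fin (ν i))) Sigma.fst = ν := by
  ext i
  rw [profile, ← Fintype.card_subtype, Fintype.card_congr (Equiv.sigmaSubtype i),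
    Fintype.card_fin]

omit [DecidableEq α] in
lemma LabelsCycles.prunedHurwitz_eq_sum (hH : IsNormalisedSimpleHurwitz H)
    (hK : IsNormalisedPrunedHurwitz K) [Nonempty ι] (he : 2 * g + Fintype.card ι = e + 2)
    (h : LabelsCycles C T lab) (hprofile : ∀ i, profile C lab i ≠ 0) :
    K g (Multiset.map (profile C lab) univ.val) =
      ∑ l ∈ Fintype.piFinset fun i => Icc 1 (profile C lab i), H g (Multiset.map l univ.val) *
        ∏ i, (-1) ^ (profile C lab i - l i) * leafWeight (profile C lab i) (l i) := by
  classical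
  have hC : C.Nonempty := by
    obtain ⟨a, ha, -⟩ := profile_pos_iff.1 (Nat.pos_of_ne_zero (hprofile (Classical.arbitrary ι)))
    exact ⟨a, ha⟩
  have hcount := congrArg (Int.cast : ℤ → ℚ)
    (h.card_filter_two_le_valency (Nat.le_add_right #C e) hprofile hC)
  push_cast at hcount
  rw [prunedHurwitz_profile_eq hK he h hprofile, hcount, sum_div]
  refine sum_congr rfl fun l hl => ?_
  have hl' (i) : 1 ≤ l i ∧ l i ≤ profile C lab i := mem_Icc.1 (Fintype.mem_piFinset.1 hl i)
  have hl0 (i) : l i ≠ 0 := Nat.one_le_iff_ne_zero.1 (hl' i).1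
  have hmarked := card_markedFactorisations_div_factorial (h := H g (Multiset.map l univ.val)) hl0
    (fun C T hT hprofile' => by
      subst hprofile'
      exact (hurwitz_profile_eq hH he hT hl0).symm) h fun i => (hl' i).2
  rw [mul_div_right_comm, hmarked, prod_mul_distrib]
  ring

lemma prunedHurwitz_eq_sum (hH : IsNormalisedSimpleHurwitz H) (hK : IsNormalisedPrunedHurwitz K)
    [Nonempty ι] (he : 2 * g + Fintype.card ι = e + 2) {ν : ι → ℕ} (hν : ∀ i, 1 ≤ ν i) :
    K g (Multiset.map ν univ.val) = ∑ l ∈ Fintype.piFinset fun i => Icc 1 (ν i),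
      H g (Multiset.map l univ.val) * ∏ i, (-1) ^ (ν i - l i) * leafWeight (ν i) (l i) := by
  obtain ⟨T, hT⟩ := exists_labelsCycles ν
  have hprofile := profile_univ_sigma_fst ν
  have hsum := hT.prunedHurwitz_eq_sum hH hK he fun i => by
    rw [hprofile]
    exact Nat.one_le_iff_ne_zero.1 (hν i)
  rwa [hprofile] at hsum

end Hurwitz

end Pruning

/-- The pruning correspondence for simple Hurwitz numbers:
`Ĥ_{g,n}(μ) = Σ_{1 ≤ νᵢ ≤ μᵢ} K̂_{g,n}(ν) · Π μᵢ^(μᵢ-νᵢ)/(μᵢ-νᵢ)!` for `(g,n) ≠ (0,1)`. -/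
theorem pruning_correspondence (H K : ℕ → Multiset ℕ → ℚ)
    (hH : IsNormalisedSimpleHurwitz H) (hK : IsNormalisedPrunedHurwitz K)
    (g n : ℕ) (hn : 1 ≤ n) (hne : ¬(g = 0 ∧ n = 1))
    (μ : Fin n → ℕ) (hμ : ∀ i, 1 ≤ μ i) :
    H g (Multiset.map μ Finset.univ.val) =
      ∑ ν ∈ Fintype.piFinset (fun i => Finset.Icc 1 (μ i)),
        K g (Multiset.map ν Finset.univ.val) *
          ∏ i, (μ i : ℚ) ^ (μ i - ν i) / Nat.factorial (μ i - ν i) := by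
  obtain ⟨e, he⟩ : ∃ e, 2 * g + n = e + 2 := ⟨2 * g + n - 2, by omega⟩
  have : Nonempty (Fin n) := ⟨⟨0, hn⟩⟩
  exact Pruning.eq_sum_of_eq_sum_leafWeight
    (η := fun l => H g (Multiset.map l Finset.univ.val))
    (κ := fun ν => K g (Multiset.map ν Finset.univ.val))
    (fun ν hν => Pruning.prunedHurwitz_eq_sum hH hK (by simpa using he) hν) hμ
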